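/- Let (W, S) be an arbitrary Coxeter system and let y ∈ W_c be fully commutative. If y is left star reducible to y′, then 𝓡(y′) = 𝓡(y) and |𝓛(y′)| ≥ |𝓛(y)|; symmetrically, if y is right star reducible to y′, then 𝓛(y′) = 𝓛(y) and |𝓡(y′)| ≥ |𝓡(y)|. -/

import Mathlib

open CoxeterSystem

variable {B W : Type*} [Group W] {M : CoxeterMatrix B} (cs : CoxeterSystem M W)

/-- `m(s,t) ≥ 3`: `s` and `t` are distinct noncommuting generators
(`M s t = 0` encodes `m(s,t) = ∞`). -/
def Noncomm (M : CoxeterMatrix B) (s t : B) : Prop := M s t = 0 ∨ 3 ≤ M s t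

/-- The longest element `w_{st}` of the rank-2 parabolic subgroup `⟨s,t⟩`
(meaningful when `3 ≤ M s t < ∞`). -/
def longest (s t : B) : W := cs.wordProd (alternatingWord s t (M s t))

/-- `w` is complex: it admits a reduced factorization `x₁ · w_{st} · x₂` where `w_{st}`
is the longest element of a rank-2 parabolic subgroup `⟨s,t⟩` with `3 ≤ m(s,t) < ∞`. -/
def IsComplex (w : W) : Prop :=
  ∃ s t : B, 3 ≤ M s t ∧ ∃ x₁ x₂ : W,
    w = x₁ * longest cs s t * x₂ ∧
    cs.length w = cs.length x₁ + cs.length (longest cs s t : W) + cs.length x₂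

/-- `w` is fully commutative, i.e. `w ∈ W_c`. -/
def FullyComm (w : W) : Prop := ¬ IsComplex cs w

/-- `x` is weakly complex: `x` is complex and `x = s·u` reduced with `u` fully commutative. -/
def IsWeaklyComplex (x : W) : Prop :=
  IsComplex cs x ∧ ∃ (s : B) (u : W), FullyComm cs u ∧ x = cs.simple s * u ∧
    cs.length x = 1 + cs.length u

/-- The alternating product `t s t s ⋯` with `k` factors, beginning with `t`. -/
def altProd (t s : B) (k : ℕ) : W :=
  cs.wordProd ((List.range k).map (fun i => if i % 2 = 0 then t else s))

/-- The left descent set `𝓛(w)`. -/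
def leftDescents (w : W) : Set B := {i | cs.IsLeftDescent w i}

/-- The right descent set `𝓡(w)`. -/
def rightDescents (w : W) : Set B := {i | cs.IsRightDescent w i}

/-- `w` is a reduced product of distinct pairwise commuting generators. -/
def IsCommProd (w : W) : Prop :=
  ∃ l : List B, l.Nodup ∧ (∀ u ∈ l, ∀ u' ∈ l, u ≠ u' → M u u' = 2) ∧
    cs.IsReduced l ∧ w = cs.wordProd l

/-- `y` is left star reducible to `x` with respect to the pair `{s,t}`:
`x` and `y` lie in the same left `{s,t}`-string and `ℓ(x) = ℓ(y) − 1`. -/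
def LeftStarReducible (s t : B) (y x : W) : Prop :=
  Noncomm M s t ∧
  ((cs.IsLeftDescent y s ∧ ¬ cs.IsLeftDescent y t ∧ x = cs.simple s * y ∧
      cs.IsLeftDescent x t) ∨
   (cs.IsLeftDescent y t ∧ ¬ cs.IsLeftDescent y s ∧ x = cs.simple t * y ∧
      cs.IsLeftDescent x s))

/-- `y` is right star reducible to `x` with respect to the pair `{s,t}`. -/
def RightStarReducible (s t : B) (y x : W) : Prop :=
  Noncomm M s t ∧
  ((cs.IsRightDescent y s ∧ ¬ cs.IsRightDescent y t ∧ x = y * cs.simple s ∧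
      cs.IsRightDescent x t) ∨
   (cs.IsRightDescent y t ∧ ¬ cs.IsRightDescent y s ∧ x = y * cs.simple t ∧
      cs.IsRightDescent x s))

/-- `y` is star reducible to `x`: there is a (possibly empty) chain of left and right
star reductions from `y` to `x`. -/
def StarReducible (y x : W) : Prop :=
  Relation.ReflTransGen
    (fun a b => ∃ s t : B, LeftStarReducible cs s t a b ∨ RightStarReducible cs s t a b) y x

/-- Property F: every fully commutative element is star reducible to a reduced product of
distinct pairwise commuting generators. -/
def PropertyF : Prop := ∀ w : W, FullyComm cs w → ∃ x : W, StarReducible cs w x ∧ IsCommProd cs x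

/-- `n(w)`: the maximum `k` such that `w` admits a reduced factorization `w = w₁·w₂·w₃`
with `w₂` a reduced product of `k` distinct pairwise commuting generators. -/
noncomputable def nval (w : W) : ℕ :=
  sSup {k | ∃ w₁ w₂ w₃ : W, w = w₁ * w₂ * w₃ ∧
    cs.length w = cs.length w₁ + cs.length w₂ + cs.length w₃ ∧
    IsCommProd cs w₂ ∧ cs.length w₂ = k}

/-- The Bruhat order: `x ≤ w` iff some reduced word for `w` has a subword that is a
reduced word for `x`. -/
def BruhatLE (x w : W) : Prop :=
  ∃ l l' : List B, cs.IsReduced l ∧ cs.wordProd l = w ∧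
    l'.Sublist l ∧ cs.IsReduced l' ∧ cs.wordProd l' = x

/-- `w = wI · wII` is the coset decomposition of `w` with respect to `I = {s,t}`:
`wI ∈ W_I`, `𝓛(wII) ∩ I = ∅` and `ℓ(w) = ℓ(wI) + ℓ(wII)`. -/
def CosetDecompL (s t : B) (w wI wII : W) : Prop :=
  w = wI * wII ∧ wI ∈ Subgroup.closure {cs.simple s, cs.simple t} ∧
  ¬ cs.IsLeftDescent wII s ∧ ¬ cs.IsLeftDescent wII t ∧
  cs.length w = cs.length wI + cs.length wII

/-- `w = wII · wI` is the right coset decomposition of `w` with respect to `I = {s,t}`: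
`wI ∈ W_I`, `𝓡(wII) ∩ I = ∅` and `ℓ(w) = ℓ(wII) + ℓ(wI)`. -/
def CosetDecompR (s t : B) (w wII wI : W) : Prop :=
  w = wII * wI ∧ wI ∈ Subgroup.closure {cs.simple s, cs.simple t} ∧
  ¬ cs.IsRightDescent wII s ∧ ¬ cs.IsRightDescent wII t ∧
  cs.length w = cs.length wII + cs.length wI

/-- `k_ε(J) = (−1)^{|J ∩ ε⁻¹(0)|}` for a set `J` of generators. -/
noncomputable def kSet (ε : B → Bool) (J : Set B) : ℤ :=
  (-1) ^ (J ∩ {i | ε i = false}).ncard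

/-- `k_ε(w) = k_ε(𝓛(w)) · k_ε(𝓡(w))`. -/
noncomputable def kElt (ε : B → Bool) (w : W) : ℤ :=
  kSet ε (leftDescents cs w) * kSet ε (rightDescents cs w)

namespace CoxeterSystem

/-! ### The exchange property -/

section Exchange

open List

open Classical in
/-- The action of the `i`th simple generator on `W × ZMod 2` that conjugates the first coordinate
and flips the second one at `s i`. -/
noncomputable def signedConj (i : B) : Function.End (W × ZMod 2) :=
  fun p => (cs.simple i * p.1 * cs.simple i, p.2 + if p.1 = cs.simple i then 1 else 0)

open Classical in
theorem prod_map_signedConj_apply (ω : List B) (p : W × ZMod 2) :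
    (ω.map cs.signedConj).prod p =
      (cs.wordProd ω * p.1 * (cs.wordProd ω)⁻¹, p.2 + ((cs.rightInvSeq ω).count p.1 : ZMod 2)) := by
  induction ω with
  | nil =>
    change p = _
    simp
  | cons i ω ih =>
    rw [map_cons, prod_cons]
    change cs.signedConj i ((ω.map cs.signedConj).prod p) = _
    rw [ih]
    have h : (cs.wordProd ω * p.1 * (cs.wordProd ω)⁻¹ = cs.simple i) ↔
        ((cs.wordProd ω)⁻¹ * cs.simple i * cs.wordProd ω = p.1) := by
      constructor <;> intro h
      · rw [← h]; group
      · rw [← h]; group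
    simp only [mul_assoc] at h
    simp [signedConj, rightInvSeq, wordProd_cons, count_cons, h, mul_assoc, add_assoc]

theorem prod_map_alternatingWord_two_mul {G : Type*} [Monoid G] (f : B → G) (i j : B) (m : ℕ) :
    ((alternatingWord i j (2 * m)).map f).prod = (f i * f j) ^ m := by
  induction m with
  | zero => simp [alternatingWord]
  | succ m ih =>
    rw [show 2 * (m + 1) = 2 * m + 1 + 1 by ring, alternatingWord_succ', alternatingWord_succ']
    simp [ih, pow_succ', mul_assoc]

open Classical in
theorem even_count_rightInvSeq_alternatingWord (i j : B) (x : W) :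
    Even ((cs.rightInvSeq (alternatingWord i j (2 * M i j))).count x) := by
  have hrev : (alternatingWord i j (2 * M i j)).reverse = alternatingWord j i (2 * M i j) := by
    apply List.ext_getElem
    · simp
    · intro n h₁ h₂
      simp only [length_reverse, length_alternatingWord] at h₁
      rw [getElem_reverse, getElem_alternatingWord _ _ _ _ (by simp; lia),
        getElem_alternatingWord _ _ _ _ h₁]
      simp only [length_alternatingWord]
      grind
  rw [← reverse_reverse (alternatingWord i j (2 * M i j)), hrev, rightInvSeq_reverse,
    count_reverse]
  set l := cs.leftInvSeq (alternatingWord j i (2 * M i j)) with hl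
  have hlen : l.length = 2 * M i j := by simp [hl]
  have hper : l.drop (M i j) = l.take (M i j) := by
    apply List.ext_getElem
    · simp [hlen]; lia
    · intro n h₁ h₂
      simp only [length_drop, length_take, hlen] at h₁ h₂
      rw [getElem_drop, getElem_take]
      simp only [hl]
      rw [getElem_leftInvSeq_alternatingWord _ _ _ _ _ (by lia),
        getElem_leftInvSeq_alternatingWord _ _ _ _ _ (by lia),
        prod_alternatingWord_eq_mul_pow, prod_alternatingWord_eq_mul_pow,
        show (2 * (M i j + n) + 1) / 2 = M i j + n by lia, show (2 * n + 1) / 2 = n by lia, pow_add]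
      simp
  rw [← take_append_drop (M i j) l, hper, count_append]
  exact ⟨_, rfl⟩

theorem isLiftable_signedConj : M.IsLiftable cs.signedConj := by
  classical
  intro i j
  funext p
  have h := cs.even_count_rightInvSeq_alternatingWord i j p.1
  rw [← prod_map_alternatingWord_two_mul, prod_map_signedConj_apply,
    (ZMod.natCast_eq_zero_iff_even).2 h]
  have : cs.wordProd (alternatingWord i j (2 * M i j)) = 1 := by
    rw [wordProd, prod_map_alternatingWord_two_mul, simple_mul_simple_pow]
  simp only [this, one_mul, inv_one, mul_one, add_zero]
  rfl

/-- The parity of the number of occurrences of `x` in the right inversion sequence of a word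
depends only on the product of the word. -/
theorem count_rightInvSeq_congr [DecidableEq W] {ω ω' : List B}
    (h : cs.wordProd ω = cs.wordProd ω') (x : W) :
    ((cs.rightInvSeq ω).count x : ZMod 2) = (cs.rightInvSeq ω').count x := by
  have key (ω : List B) : cs.lift ⟨_, cs.isLiftable_signedConj⟩ (cs.wordProd ω) (x, 0) =
      (cs.wordProd ω * x * (cs.wordProd ω)⁻¹, ((cs.rightInvSeq ω).count x : ZMod 2)) := by
    have := cs.prod_map_signedConj_apply ω (x, 0)
    rw [wordProd, map_list_prod, map_map]
    simp only [Function.comp_def, lift_apply_simple]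
    rw [this, zero_add]
    simp only [wordProd, Prod.mk.injEq, true_and]
    congr!
  have h₁ := key ω
  rw [h, key ω'] at h₁
  exact (congrArg Prod.snd h₁).symm

theorem IsRightDescent.simple_mem_rightInvSeq {ω : List B} {i : B}
    (h : cs.IsRightDescent (cs.wordProd ω) i) : cs.simple i ∈ cs.rightInvSeq ω := by
  classical
  obtain ⟨ω', hω', hπ⟩ := cs.exists_isReduced (cs.wordProd ω * cs.simple i)
  have hprod : cs.wordProd (ω'.concat i) = cs.wordProd ω := by
    rw [wordProd_concat, ← hπ, simple_mul_simple_cancel_right]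
  have hred : cs.IsReduced (ω'.concat i) := by
    have := cs.isRightDescent_iff.1 h
    rw [hπ, hω'.eq] at this
    rw [IsReduced, hprod, ← this, length_concat]
  have hmem : cs.simple i ∈ cs.rightInvSeq (ω'.concat i) := by
    rw [rightInvSeq_concat]
    simp
  have hcount := cs.count_rightInvSeq_congr hprod (cs.simple i)
  rw [count_eq_one_of_mem hred.nodup_rightInvSeq hmem] at hcount
  by_contra hn
  rw [count_eq_zero_of_not_mem hn] at hcount
  simp at hcount

theorem IsLeftDescent.simple_mem_leftInvSeq {ω : List B} {i : B}
    (h : cs.IsLeftDescent (cs.wordProd ω) i) : cs.simple i ∈ cs.leftInvSeq ω := by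
  rw [← isRightDescent_inv_iff, ← wordProd_reverse] at h
  simpa [rightInvSeq_reverse] using h.simple_mem_rightInvSeq

end Exchange

end CoxeterSystem

namespace CoxeterSystem

/-! ### The geometric representation and the order of `s i * s j` -/

section Geometric

open Real Polynomial.Chebyshev

/-- The functional `v ↦ 2 ⟨αᵢ, v⟩` for the Tits form on `B →₀ ℝ`. When `M i j = 0`,
`π / 0 = 0` gives the value `-2` at the basis vector `αⱼ`. -/
noncomputable def simpleCoroot (M : CoxeterMatrix B) (i : B) : Module.Dual ℝ (B →₀ ℝ) :=
  Finsupp.lsum ℝ fun j => (-2 * cos (π / M i j)) • LinearMap.id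

theorem simpleCoroot_single (i j : B) :
    simpleCoroot M i (Finsupp.single j 1) = -2 * cos (π / M i j) := by
  simp [simpleCoroot]

theorem simpleCoroot_single_self (i : B) :
    simpleCoroot M i (Finsupp.single i 1) = 2 := by
  simp [simpleCoroot_single]

/-- The reflection of `B →₀ ℝ` attached to a simple generator. -/
noncomputable def simpleReflection (M : CoxeterMatrix B) (i : B) : (B →₀ ℝ) ≃ₗ[ℝ] (B →₀ ℝ) :=
  Module.reflection (simpleCoroot_single_self (M := M) i)

theorem two_mul_cos_eq_coroot_mul_sub_two (i j : B) :
    (2 * cos (2 * (π / M i j)) : ℝ) = simpleCoroot M i (Finsupp.single j 1) *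
      simpleCoroot M j (Finsupp.single i 1) - 2 := by
  rw [simpleCoroot_single, simpleCoroot_single, M.symmetric j i, cos_two_mul]
  ring

theorem sin_two_mul_pi_div_ne_zero {m : ℕ} (hm : 3 ≤ m) : sin (2 * (π / m)) ≠ 0 := by
  have hm3 : (3 : ℝ) ≤ m := by exact_mod_cast hm
  apply ne_of_gt
  apply sin_pos_of_pos_of_lt_pi (by positivity)
  rw [← mul_div_assoc, div_lt_iff₀ (by positivity)]
  nlinarith [pi_pos]

theorem pow_simpleReflection_mul_of_three_le {i j : B} (hge : 3 ≤ M i j) :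
    (simpleReflection M i * simpleReflection M j) ^ M i j = 1 := by
  have hm0 : (M i j : ℝ) ≠ 0 := by
    have : M i j ≠ 0 := by lia
    exact_mod_cast this
  have hsin := sin_two_mul_pi_div_ne_zero hge
  refine LinearEquiv.ext fun v => ?_
  rw [simpleReflection, simpleReflection,
    Module.reflection_mul_reflection_pow_apply _ _ _ _ _
      (two_mul_cos_eq_coroot_mul_sub_two i j)]
  have hS := S_two_mul_real_cos (2 * (π / M i j))
  rcases Nat.even_or_odd' (M i j) with ⟨p, hp | hp⟩
  · have hcast : (M i j : ℝ) = 2 * p := by exact_mod_cast hp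
    have h0 : (S ℝ ((p : ℤ) - 1)).eval (2 * cos (2 * (π / M i j))) = 0 := by
      refine (mul_eq_zero.1 ((hS _).trans ?_)).resolve_right hsin
      push_cast
      rw [show ((p : ℝ) - 1 + 1) * (2 * (π / M i j)) = π by
        have hp0 : (p : ℝ) ≠ 0 := by
          intro h
          simp [hcast, h] at hm0
        rw [hcast]
        field_simp
        ring]
      exact sin_pi
    rw [show ((M i j : ℤ) - 2) / 2 = p - 1 by lia, show ((M i j : ℤ) - 1) / 2 = p - 1 by lia, h0]
    simp
  · have hcast : (M i j : ℝ) = 2 * p + 1 := by exact_mod_cast hp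
    have h0 : (S ℝ (p : ℤ)).eval (2 * cos (2 * (π / M i j))) +
        (S ℝ ((p : ℤ) - 1)).eval (2 * cos (2 * (π / M i j))) = 0 := by
      refine (mul_eq_zero.1 ?_).resolve_right hsin
      rw [add_mul, hS, hS]
      push_cast
      have e₁ : ((p : ℝ) + 1) * (2 * (π / M i j)) = π + π / M i j := by
        rw [hcast] at hm0 ⊢; field_simp; ring
      have e₂ : ((p : ℝ) - 1 + 1) * (2 * (π / M i j)) = π - π / M i j := by
        rw [hcast] at hm0 ⊢; field_simp; ring
      rw [e₁, e₂, sin_pi_sub, add_comm π, sin_add_pi]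
      ring
    rw [show ((M i j : ℤ) - 2) / 2 = p - 1 by lia, show ((M i j : ℤ) - 1) / 2 = p by lia,
      show ((M i j : ℤ) - 3) / 2 = p - 1 by lia, show (M i j : ℤ) / 2 = p by lia, h0]
    simp

theorem isLiftable_simpleReflection : M.IsLiftable (simpleReflection M) := by
  intro i j
  change (simpleReflection M i * simpleReflection M j) ^ M i j = 1
  rcases eq_or_ne i j with rfl | hij
  · rw [M.diagonal, pow_one]
    refine LinearEquiv.ext fun v => ?_
    exact Module.involutive_reflection (simpleCoroot_single_self (M := M) i) v
  have hM : M i j ≠ 1 := M.off_diagonal i j hij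
  rcases Nat.lt_or_ge (M i j) 3 with hlt | hge
  · interval_cases hm : M i j
    · simp
    · exact absurd rfl hM
    · have h₁ : simpleCoroot M i (Finsupp.single j 1) = 0 := by
        simp [simpleCoroot_single, hm]
      have h₂ : simpleCoroot M j (Finsupp.single i 1) = 0 := by
        simp [simpleCoroot_single, M.symmetric j i, hm]
      refine LinearEquiv.ext fun v => ?_
      simp only [simpleReflection, pow_two, LinearEquiv.mul_apply, Module.reflection_apply,
        map_sub, map_smul, h₁, h₂, simpleCoroot_single_self, LinearEquiv.coe_one, id]
      module
  exact pow_simpleReflection_mul_of_three_le hge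

theorem pow_simple_mul_simple_ne_one {i j : B} (hij : i ≠ j) {k : ℕ} (hk : 0 < k)
    (hkM : M i j = 0 ∨ k < M i j) : (cs.simple i * cs.simple j) ^ k ≠ 1 := by
  intro h
  have hrep := congrArg (cs.lift ⟨_, isLiftable_simpleReflection⟩) h
  rw [map_pow, map_mul, lift_apply_simple, lift_apply_simple, map_one] at hrep
  have hx := congrArg (fun g : (B →₀ ℝ) ≃ₗ[ℝ] (B →₀ ℝ) => g (Finsupp.single i 1)) hrep
  simp only [simpleReflection, LinearEquiv.coe_one, id] at hx
  rw [Module.reflection_mul_reflection_pow_apply_self _ _ _ _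
    (two_mul_cos_eq_coroot_mul_sub_two i j)] at hx
  have hi := DFunLike.congr_fun hx i
  have hj := DFunLike.congr_fun hx j
  simp [hij, hij.symm, simpleCoroot_single, M.symmetric j i] at hi hj
  rcases hkM with hM | hkM
  · simp [hM, S_eval_two] at hj
    lia
  have hM : M i j ≠ 1 := M.off_diagonal i j hij
  rcases Nat.lt_or_ge (M i j) 3 with hlt | hge
  · have hm : M i j = 2 := by lia
    obtain rfl : k = 1 := by lia
    simp [hm] at hi
    rw [mul_div_cancel₀ _ (by norm_num), cos_pi] at hi
    norm_num at hi
  have hm3 : (3 : ℝ) ≤ M i j := by exact_mod_cast hge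
  have hcos : cos (π / M i j) ≠ 0 := by
    apply ne_of_gt
    apply cos_pos_of_mem_Ioo ⟨?_, ?_⟩
    · have : 0 < π / M i j := by positivity
      linarith [pi_pos]
    · exact div_lt_div_of_pos_left pi_pos (by norm_num) (by linarith)
  have hS := S_two_mul_real_cos (2 * (π / M i j))
  have hS0 := hj.resolve_right hcos
  rw [hS0, add_zero] at hi
  have h₁ := hS k
  have h₂ := hS (k - 1)
  rw [hi] at h₁
  rw [hS0] at h₂
  have hsin := sin_two_mul_pi_div_ne_zero hge
  push_cast at h₁ h₂
  rw [sub_add_cancel, zero_mul] at h₂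
  rw [add_mul, sin_add, ← h₂, one_mul, zero_mul, one_mul, zero_add] at h₁
  have hcos1 : cos (k * (2 * (π / M i j))) = 1 :=
    mul_right_cancel₀ hsin (by linarith)
  have hkM' : (k : ℝ) < M i j := by exact_mod_cast hkM
  have hk' : (0 : ℝ) < k := by exact_mod_cast hk
  rw [cos_eq_one_iff_of_lt_of_lt] at hcos1
  · have : 0 < k * (2 * (π / M i j)) := by positivity
    linarith
  · have : 0 < k * (2 * (π / M i j)) := by positivity
    linarith [pi_pos]
  · rw [show k * (2 * (π / M i j)) = (k / M i j) * (2 * π) by ring]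
    have : (k : ℝ) / M i j < 1 := (div_lt_one (by linarith)).2 hkM'
    nlinarith [pi_pos]

theorem simple_injective : Function.Injective cs.simple := by
  intro i j h
  by_contra hij
  have hM : M i j ≠ 1 := M.off_diagonal i j hij
  refine cs.pow_simple_mul_simple_ne_one hij one_pos (by lia) ?_
  simp [h]

end Geometric

end CoxeterSystem

namespace CoxeterSystem

/-! ### Elements with two left descents -/

section Dihedral

open List

theorem mem_leftInvSeq_cons {ω : List B} {i : B} {x : W} :
    x ∈ cs.leftInvSeq (i :: ω) ↔
      x = cs.simple i ∨ ∃ y ∈ cs.leftInvSeq ω, x = cs.simple i * y * cs.simple i := by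
  simp [leftInvSeq, eq_comm]

theorem exists_eq_pow_of_mem_leftInvSeq_alternatingWord (i j : B) (k : ℕ) {x : W}
    (hx : x ∈ cs.leftInvSeq (alternatingWord i j k)) :
    ∃ p < k, cs.simple (if Even k then j else i) * x =
      (cs.simple (if Even k then j else i) * cs.simple (if Even k then i else j)) ^ (p + 1) := by
  induction k generalizing x with
  | zero => simp [alternatingWord] at hx
  | succ k ih =>
    rw [alternatingWord_succ', mem_leftInvSeq_cons] at hx
    obtain rfl | ⟨y, hy, rfl⟩ := hx
    · refine ⟨0, by lia, ?_⟩
      by_cases hk : Even k <;> simp [hk, Nat.even_add_one]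
    · obtain ⟨p, hp, hpy⟩ := ih hy
      refine ⟨p + 1, by lia, ?_⟩
      have key (a b : W) : a * ((b * a) ^ (p + 1) * b) = (a * b) ^ (p + 1 + 1) := by
        rw [mul_pow_mul, ← mul_assoc, ← pow_succ']
      by_cases hk : Even k
      · simp only [hk, if_true, Nat.even_add_one, not_true_eq_false, if_false] at hpy ⊢
        rw [hpy, key]
      · simp only [hk, if_true, Nat.even_add_one, not_false_eq_true, if_false] at hpy ⊢
        rw [hpy, key]

/-- If `i` and `j` are distinct left descents of `y`, then `y` has a reduced word beginning with
any alternating word in `i` and `j` of length at most `M i j`. -/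
theorem exists_isReduced_alternatingWord_append {i j : B} (hij : i ≠ j) {y : W}
    (hi : cs.IsLeftDescent y i) (hj : cs.IsLeftDescent y j) (k : ℕ)
    (hk : M i j = 0 ∨ k ≤ M i j) :
    ∃ ω : List B, cs.IsReduced (alternatingWord i j k ++ ω) ∧
      cs.wordProd (alternatingWord i j k ++ ω) = y := by
  induction k with
  | zero =>
    obtain ⟨ω, hω, rfl⟩ := cs.exists_isReduced y
    exact ⟨ω, hω, rfl⟩
  | succ k ih =>
    obtain ⟨ω, hω, hy⟩ := ih (by lia)
    set c := if Even k then j else i with hc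
    have hdesc : cs.IsLeftDescent (cs.wordProd (alternatingWord i j k ++ ω)) c := by
      rw [hy, hc]
      split_ifs <;> assumption
    obtain ⟨n, hn, hnc⟩ := mem_iff_getElem.1 hdesc.simple_mem_leftInvSeq
    rcases Nat.lt_or_ge n k with hnk | hnk
    · exfalso
      have hmem : cs.simple c ∈ cs.leftInvSeq (alternatingWord i j k) := by
        have htake : alternatingWord i j k = (alternatingWord i j k ++ ω).take k := by simp
        rw [htake, leftInvSeq_take, ← hnc]
        exact mem_take_iff_getElem.2 ⟨n, by simp at hn ⊢; lia, rfl⟩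
      obtain ⟨p, hp, hpow⟩ := cs.exists_eq_pow_of_mem_leftInvSeq_alternatingWord i j k hmem
      rw [← hc, simple_mul_simple_self] at hpow
      by_cases hk' : Even k
      · simp only [hc, hk', if_true] at hpow
        exact cs.pow_simple_mul_simple_ne_one hij.symm (Nat.succ_pos p)
          (by rw [M.symmetric]; lia) hpow.symm
      · simp only [hc, hk', if_false] at hpow
        exact cs.pow_simple_mul_simple_ne_one hij (Nat.succ_pos p) (by lia) hpow.symm
    · have herase := cs.getD_leftInvSeq_mul_wordProd (alternatingWord i j k ++ ω) n
      rw [getD_eq_getElem _ _ hn, hnc, eraseIdx_append_of_length_le (by simpa using hnk),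
        length_alternatingWord] at herase
      have hprod : cs.wordProd (alternatingWord i j (k + 1) ++ ω.eraseIdx (n - k)) = y := by
        rw [alternatingWord_succ', cons_append, wordProd_cons, ← hc, ← herase,
          simple_mul_simple_cancel_left, hy]
      refine ⟨_, ?_, hprod⟩
      have hlen := hω.eq
      simp only [length_leftInvSeq, length_append, length_alternatingWord] at hn
      rw [IsReduced, hprod, ← hy, hlen, length_append, length_append, length_eraseIdx_of_lt,
        length_alternatingWord, length_alternatingWord] <;> lia

theorem finite_setOf_isLeftDescent (w : W) : {i | cs.IsLeftDescent w i}.Finite := by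
  obtain ⟨ω, -, rfl⟩ := cs.exists_isReduced w
  refine Set.Finite.of_finite_image ((cs.leftInvSeq ω).finite_toSet.subset ?_)
    cs.simple_injective.injOn
  rintro _ ⟨i, hi, rfl⟩
  exact IsLeftDescent.simple_mem_leftInvSeq cs hi

/-- Left multiplication by `s i` creates a new right descent `j` only if
`s i * w = w * s j`. -/
theorem IsRightDescent.of_simple_mul {w : W} {i j : B}
    (h : cs.IsRightDescent (cs.simple i * w) j) :
    cs.IsRightDescent w j ∨ cs.simple i * w = w * cs.simple j := by
  obtain ⟨ω, hω, rfl⟩ := cs.exists_isReduced w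
  rw [← wordProd_cons] at h
  have hmem := h.simple_mem_rightInvSeq
  rw [rightInvSeq, mem_cons] at hmem
  obtain hmem | hmem := hmem
  · right
    rw [hmem]
    group
  · exact Or.inl (cs.isRightInversion_of_mem_rightInvSeq hω hmem).2

end Dihedral

end CoxeterSystem

/-! ### Star reductions of fully commutative elements -/

theorem longest_inv (s t : B) :
    (longest cs s t)⁻¹ = longest cs s t ∨ (longest cs s t)⁻¹ = longest cs t s := by
  simp only [longest, prod_alternatingWord_eq_mul_pow, M.symmetric t s]
  by_cases h : Even (M s t)
  · right
    simp [h, ← inv_pow]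
  · left
    simp only [h, if_false, mul_inv_rev, ← inv_pow, inv_simple]
    exact mul_pow_mul _ _ _

variable {cs}

theorem FullyComm.inv {y : W} (hy : FullyComm cs y) : FullyComm cs y⁻¹ := by
  rintro ⟨s, t, hst, x₁, x₂, h, hlen⟩
  apply hy
  have hy' : y = x₂⁻¹ * (longest cs s t)⁻¹ * x₁⁻¹ := by
    rw [← inv_inv y, h]
    group
  rw [length_inv] at hlen
  have hlen' : cs.length y =
      cs.length x₂⁻¹ + cs.length (longest cs s t)⁻¹ + cs.length x₁⁻¹ := by
    simp only [length_inv]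
    lia
  obtain hl | hl := longest_inv cs s t
  · exact ⟨s, t, hst, x₂⁻¹, x₁⁻¹, hl ▸ hy', hl ▸ hlen'⟩
  · exact ⟨t, s, M.symmetric s t ▸ hst, x₂⁻¹, x₁⁻¹, hl ▸ hy', hl ▸ hlen'⟩

/-- Removing a left descent of a fully commutative element keeps its other left descents. -/
theorem FullyComm.isLeftDescent_simple_mul {y : W} (hy : FullyComm cs y) {s u : B} (hsu : s ≠ u)
    (hs : cs.IsLeftDescent y s) (hu : cs.IsLeftDescent y u) :
    cs.IsLeftDescent (cs.simple s * y) u := by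
  have hM : M s u ≠ 1 := M.off_diagonal s u hsu
  have hM0 : M s u ≠ 0 := by
    intro h0
    obtain ⟨ω, hω, hprod⟩ := cs.exists_isReduced_alternatingWord_append hsu hs hu
      (cs.length y + 1) (Or.inl h0)
    have := hω.eq
    rw [hprod, List.length_append, length_alternatingWord] at this
    lia
  obtain ⟨ω, hω, hprod⟩ := cs.exists_isReduced_alternatingWord_append hsu hs hu (M s u)
    (Or.inr le_rfl)
  rcases Nat.lt_or_ge (M s u) 3 with hlt | hge
  · have hM2 : M s u = 2 := by lia
    have halt : alternatingWord s u (M s u) ++ ω = s :: u :: ω := by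
      simp [hM2, alternatingWord]
    rw [halt] at hω hprod
    have hred : cs.IsReduced (u :: ω) := hω.drop 1
    rw [← hprod, wordProd_cons, simple_mul_simple_cancel_left, IsLeftDescent, hred.eq,
      wordProd_cons, simple_mul_simple_cancel_left]
    exact Nat.lt_succ_of_le (cs.length_wordProd_le ω)
  · refine absurd ⟨s, u, hge, 1, cs.wordProd ω, ?_, ?_⟩ hy
    · rw [one_mul, longest, ← wordProd_append, hprod]
    · have h₁ : cs.IsReduced (alternatingWord s u (M s u)) := by
        simpa [List.take_append] using hω.take (M s u)
      have h₂ : cs.IsReduced ω := by simpa [List.drop_append] using hω.drop (M s u)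
      rw [longest, h₁.eq, h₂.eq, ← hprod, hω.eq, length_one, List.length_append, zero_add]

theorem FullyComm.descents_of_left_star {y : W} (hy : FullyComm cs y) {s t : B}
    (hs : cs.IsLeftDescent y s) (ht : ¬ cs.IsLeftDescent y t)
    (ht' : cs.IsLeftDescent (cs.simple s * y) t) :
    rightDescents cs (cs.simple s * y) = rightDescents cs y ∧
      (leftDescents cs y).ncard ≤ (leftDescents cs (cs.simple s * y)).ncard := by
  have hlen := cs.isLeftDescent_iff.1 hs
  constructor
  · ext u
    change cs.IsRightDescent (cs.simple s * y) u ↔ cs.IsRightDescent y u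
    constructor
    · intro hu
      have h₁ := cs.isRightDescent_iff.1 hu
      have h₂ := cs.length_mul_le (cs.simple s) (cs.simple s * y * cs.simple u)
      rw [mul_assoc, simple_mul_simple_cancel_left, length_simple, ← mul_assoc] at h₂
      rw [IsRightDescent]
      lia
    · intro hu
      refine (IsRightDescent.of_simple_mul cs (i := s) (j := u) (by simpa using hu)).resolve_right ?_
      intro h
      rw [simple_mul_simple_cancel_left] at h
      apply ht
      have h₁ := cs.isLeftDescent_iff.1 ht'
      have h₂ := cs.length_mul_le (cs.simple t * (cs.simple s * y)) (cs.simple u)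
      rw [mul_assoc, ← h, length_simple] at h₂
      rw [IsLeftDescent]
      lia
  · have hsub : insert t (leftDescents cs y \ {s}) ⊆ leftDescents cs (cs.simple s * y) := by
      rintro u (rfl | ⟨hu, hus⟩)
      · exact ht'
      · exact hy.isLeftDescent_simple_mul (Ne.symm hus) hs hu
    have hfin := cs.finite_setOf_isLeftDescent y
    calc (leftDescents cs y).ncard = (leftDescents cs y \ {s}).ncard + 1 :=
          (Set.ncard_sdiff_singleton_add_one (show s ∈ leftDescents cs y from hs) hfin).symm
      _ = (insert t (leftDescents cs y \ {s})).ncard :=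
          (Set.ncard_insert_of_notMem (fun h => ht h.1) (hfin.subset Set.sdiff_subset)).symm
      _ ≤ _ := Set.ncard_le_ncard hsub (cs.finite_setOf_isLeftDescent _)

theorem LeftStarReducible.descents {y y' : W} {s t : B} (h : LeftStarReducible cs s t y y')
    (hy : FullyComm cs y) :
    rightDescents cs y' = rightDescents cs y ∧
      (leftDescents cs y).ncard ≤ (leftDescents cs y').ncard := by
  obtain ⟨-, ⟨hs, ht, rfl, ht'⟩ | ⟨ht, hs, rfl, hs'⟩⟩ := h
  · exact hy.descents_of_left_star hs ht ht'
  · exact hy.descents_of_left_star ht hs hs'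

theorem RightStarReducible.inv {y y' : W} {s t : B} (h : RightStarReducible cs s t y y') :
    LeftStarReducible cs s t y⁻¹ y'⁻¹ := by
  obtain ⟨hst, ⟨hs, ht, rfl, ht'⟩ | ⟨ht, hs, rfl, hs'⟩⟩ := h
  · exact ⟨hst, Or.inl ⟨by rwa [isLeftDescent_inv_iff], by rwa [isLeftDescent_inv_iff],
      by simp, by rwa [isLeftDescent_inv_iff]⟩⟩
  · exact ⟨hst, Or.inr ⟨by rwa [isLeftDescent_inv_iff], by rwa [isLeftDescent_inv_iff],
      by simp, by rwa [isLeftDescent_inv_iff]⟩⟩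

theorem leftDescents_inv (w : W) : leftDescents cs w⁻¹ = rightDescents cs w :=
  Set.ext fun _ => cs.isLeftDescent_inv_iff

theorem rightDescents_inv (w : W) : rightDescents cs w⁻¹ = leftDescents cs w :=
  Set.ext fun _ => cs.isRightDescent_inv_iff

variable (cs)

/-- If `y ∈ W_c` is left star reducible to `y′`, then `𝓡(y′) = 𝓡(y)` and
`|𝓛(y′)| ≥ |𝓛(y)|`; symmetrically, if `y` is right star reducible to `y′`, then
`𝓛(y′) = 𝓛(y)` and `|𝓡(y′)| ≥ |𝓡(y)|`. -/
theorem statement16 (y : W) (hy : FullyComm cs y) :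
    (∀ (y' : W) (s t : B), LeftStarReducible cs s t y y' →
      rightDescents cs y' = rightDescents cs y ∧
      (leftDescents cs y).ncard ≤ (leftDescents cs y').ncard) ∧
    (∀ (y' : W) (s t : B), RightStarReducible cs s t y y' →
      leftDescents cs y' = leftDescents cs y ∧
      (rightDescents cs y).ncard ≤ (rightDescents cs y').ncard) := by
  refine ⟨fun y' s t h => h.descents hy, fun y' s t h => ?_⟩
  have key := h.inv.descents hy.inv
  simpa only [leftDescents_inv, rightDescents_inv] using key
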